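/- arXiv:0810.5373 — 2 statements merged into one kernel-verified Lean document; each statement's English description precedes it below -/
import Mathlib

section
/- For any two pairs of distinct elements x, y ∈ P and x′, y′ ∈ P, the following identity holds in the Keel module V_P: Σ_{A∈B(P), x∉A, y∉A} (|A|−1)·e_A = Σ_{A∈B(P), x′∉A, y′∉A} (|A|−1)·e_A. (This expresses that the formula κ₁ = Σ_{A∌x,y} (|A|−1) δ_{0,A} for the kappa class on M̄_{0,P}, from part d) of Theorem 6.1, gives a well-defined element of the Keel module, independent of the auxiliary marked points x, y; it is a consequence of the defining relations of V_P.) -/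
/-- `B(P)`: the set of subsets `S ⊆ P` with `2 ≤ |S| ≤ n - 2`, as a subtype. -/
abbrev KeelB (P : Type*) [Fintype P] [DecidableEq P] : Type _ :=
  {S : Finset P // 2 ≤ S.card ∧ S.card ≤ Fintype.card P - 2}

/-- The complement operation on `B(P)`. -/
def KeelB.compl {P : Type*} [Fintype P] [DecidableEq P] (S : KeelB P) : KeelB P :=
  ⟨(S : Finset P)ᶜ, by
    have h1 := S.2.1
    have h2 := S.2.2
    have h3 : (S : Finset P).card ≤ Fintype.card P := Finset.card_le_univ _
    rw [Finset.card_compl]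
    omega⟩

/-- The sum `Σ_{S ∈ B(P), p,q ∈ S, r,s ∉ S} e_S` in the free ℤ-module on `B(P)`. -/
noncomputable def keelQuad {P : Type*} [Fintype P] [DecidableEq P] (p q r s : P) : KeelB P →₀ ℤ :=
  ∑ S ∈ Finset.univ.filter
      (fun S : KeelB P =>
        p ∈ (S : Finset P) ∧ q ∈ (S : Finset P) ∧ r ∉ (S : Finset P) ∧ s ∉ (S : Finset P)),
    Finsupp.single S 1

/-- The defining relations of the Keel module: (i) `e_S - e_{P∖S}` for `S ∈ B(P)`;
(ii) the four-point relations for every quadruple of distinct elements of `P`. -/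
def keelRels (P : Type*) [Fintype P] [DecidableEq P] : Set (KeelB P →₀ ℤ) :=
  (Set.range fun S : KeelB P => Finsupp.single S 1 - Finsupp.single S.compl 1) ∪
  {x | ∃ p q r s : P, p ≠ q ∧ p ≠ r ∧ p ≠ s ∧ q ≠ r ∧ q ≠ s ∧ r ≠ s ∧
      (x = keelQuad p q r s - keelQuad p r q s ∨ x = keelQuad p q r s - keelQuad p s q r)}

/-- The Keel module `V_P`: the free ℤ-module on `B(P)` modulo the Keel relations. -/
abbrev KeelModule (P : Type*) [Fintype P] [DecidableEq P] : Type _ :=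
  (KeelB P →₀ ℤ) ⧸ Submodule.span ℤ (keelRels P)

/-- The image of the basis element `e_S` in the Keel module. -/
noncomputable def keelClass {P : Type*} [Fintype P] [DecidableEq P] (S : KeelB P) : KeelModule P :=
  Submodule.Quotient.mk (Finsupp.single S 1)

/-!
By symmetry, and because two pairs can be joined by exchanging one point at a time, it suffices to
exchange `y` for `z` with `x` fixed. The terms with `x, y, z ∉ A` are common to both sums. In the
rest of the first sum `z ∈ A`, and `|A| - 1` counts the `w ∈ A` other than `z`; so this rest is the
sum over `w` of the four-point sums `Σ_{w,z ∈ A; y,x ∉ A} δ_A`, and the four-point relation swaps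
`z` and `y` in each of them.
-/

open Finset

section KappaSum

variable {P ι M : Type*} [DecidableEq P] [Fintype ι] [AddCommGroup M]

/-- The four-point sum `Σ_{p,q ∈ S i; r,s ∉ S i} δ i` of a family of sets `S` with weights `δ`
in an abelian group; for `δ = keelClass` it is the class of `keelQuad p q r s`. -/
def fourPointSum (S : ι → Finset P) (δ : ι → M) (p q r s : P) : M :=
  ∑ i with p ∈ S i ∧ q ∈ S i ∧ r ∉ S i ∧ s ∉ S i, δ i

/-- The four-point relation of Keel for an arbitrary weighted family of sets. The other relation
in `keelRels` is this one with `r` and `s` exchanged. -/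
def FourPointRelation (S : ι → Finset P) (δ : ι → M) : Prop :=
  ∀ ⦃p q r s : P⦄, p ≠ q → p ≠ r → p ≠ s → q ≠ r → q ≠ s → r ≠ s →
    fourPointSum S δ p q r s = fourPointSum S δ p r q s

/-- The expression `Σ_{x,y ∉ S i} (|S i| - 1) δ i` for the kappa class, for an arbitrary weighted
family of sets. The coefficient is an integer, equal to `-1` when `S i` is empty. -/
def kappaSum (S : ι → Finset P) (δ : ι → M) (x y : P) : M :=
  ∑ i with x ∉ S i ∧ y ∉ S i, ((#(S i) : ℤ) - 1) • δ i

theorem kappaSum_comm (S : ι → Finset P) (δ : ι → M) (x y : P) :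
    kappaSum S δ x y = kappaSum S δ y x := by
  simp only [kappaSum, and_comm]

theorem card_sub_one_zsmul_eq_sum_erase {A : Finset P} {z : P} (hz : z ∈ A) (m : M) :
    ((#A : ℤ) - 1) • m = ∑ _w ∈ A.erase z, m := by
  rw [sum_const, ← natCast_zsmul, cast_card_erase_of_mem hz]

theorem sum_card_sub_one_zsmul_eq_sum_fourPointSum (S : ι → Finset P) (δ : ι → M) (x y z : P) :
    ∑ i with z ∈ S i ∧ y ∉ S i ∧ x ∉ S i, ((#(S i) : ℤ) - 1) • δ i =
      ∑ w ∈ univ.biUnion S \ {x, y, z}, fourPointSum S δ w z y x := by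
  calc
    _ = ∑ i with z ∈ S i ∧ y ∉ S i ∧ x ∉ S i, ∑ _w ∈ (S i).erase z, δ i :=
      sum_congr rfl fun i hi ↦ card_sub_one_zsmul_eq_sum_erase (mem_filter.mp hi).2.1 (δ i)
    _ = _ := sum_comm' fun i w ↦ by
      simp only [mem_filter_univ, mem_erase, mem_sdiff, mem_biUnion, mem_univ, true_and,
        mem_insert, mem_singleton]
      grind

theorem kappaSum_eq_add_sum_fourPointSum (S : ι → Finset P) (δ : ι → M) (x y z : P) :
    kappaSum S δ x y =
      ∑ i with x ∉ S i ∧ y ∉ S i ∧ z ∉ S i, ((#(S i) : ℤ) - 1) • δ i +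
        ∑ w ∈ univ.biUnion S \ {x, y, z}, fourPointSum S δ w z y x := by
  rw [← sum_card_sub_one_zsmul_eq_sum_fourPointSum, kappaSum,
    ← sum_filter_not_add_sum_filter _ (fun i ↦ z ∈ S i), filter_filter, filter_filter]
  congr 2 <;> grind

namespace FourPointRelation

variable {S : ι → Finset P} {δ : ι → M}

theorem kappaSum_eq_kappaSum_right (hδ : FourPointRelation S δ) {x y z : P} (hxy : x ≠ y)
    (hxz : x ≠ z) : kappaSum S δ x y = kappaSum S δ x z := by
  obtain rfl | hyz := eq_or_ne y z
  · rfl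
  have swap_yz : ∀ w ∈ univ.biUnion S \ {x, y, z},
      fourPointSum S δ w z y x = fourPointSum S δ w y z x := fun w hw ↦ by
    simp only [mem_sdiff, mem_insert, mem_singleton, not_or] at hw
    obtain ⟨-, hwx, hwy, hwz⟩ := hw
    exact hδ hwz hwy hwx hyz.symm hxz.symm hxy.symm
  rw [kappaSum_eq_add_sum_fourPointSum S δ x y z, kappaSum_eq_add_sum_fourPointSum S δ x z y,
    sum_congr rfl swap_yz, pair_comm y z]
  simp only [and_comm]

theorem kappaSum_eq_kappaSum_left (hδ : FourPointRelation S δ) {x y z : P} (hxz : x ≠ z)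
    (hyz : y ≠ z) : kappaSum S δ x z = kappaSum S δ y z := by
  rw [kappaSum_comm S δ x, kappaSum_comm S δ y, hδ.kappaSum_eq_kappaSum_right hxz.symm hyz.symm]

end FourPointRelation

theorem keelKappa_welldefined_general {S : ι → Finset P} {δ : ι → M}
    (hδ : FourPointRelation S δ) {x y x' y' : P} (hxy : x ≠ y) (hxy' : x' ≠ y') :
    kappaSum S δ x y = kappaSum S δ x' y' := by
  obtain rfl | hx := eq_or_ne x y'
  · rw [hδ.kappaSum_eq_kappaSum_right hxy hxy'.symm, kappaSum_comm]
  · rw [hδ.kappaSum_eq_kappaSum_right hxy hx, hδ.kappaSum_eq_kappaSum_left hx hxy']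

end KappaSum

section KeelModule

variable {P : Type*} [Fintype P] [DecidableEq P]

theorem mk_keelQuad (p q r s : P) :
    (Submodule.Quotient.mk (keelQuad p q r s) : KeelModule P) =
      fourPointSum (fun A : KeelB P ↦ (A : Finset P)) keelClass p q r s :=
  map_sum (Submodule.span ℤ (keelRels P)).mkQ _ _

theorem fourPointRelation_keelClass :
    FourPointRelation (fun A : KeelB P ↦ (A : Finset P)) keelClass := by
  intro p q r s hpq hpr hps hqr hqs hrs
  rw [← mk_keelQuad, ← mk_keelQuad, Submodule.Quotient.eq]
  exact Submodule.subset_span <|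
    .inr ⟨p, q, r, s, hpq, hpr, hps, hqr, hqs, hrs, .inl rfl⟩

end KeelModule

/-- The expression `κ₁ = Σ_{A ∈ B(P), x,y ∉ A} (|A| - 1) δ_A` in the Keel module is
independent of the choice of the auxiliary pair of distinct points `x, y`. -/
theorem keelKappa_welldefined (P : Type*) [Fintype P] [DecidableEq P]
    (hn : 4 ≤ Fintype.card P) (x y x' y' : P) (hxy : x ≠ y) (hxy' : x' ≠ y') :
    (∑ A ∈ Finset.univ.filter
        (fun A : KeelB P => x ∉ (A : Finset P) ∧ y ∉ (A : Finset P)),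
      (((A : Finset P).card : ℤ) - 1) • keelClass A) =
    (∑ A ∈ Finset.univ.filter
        (fun A : KeelB P => x' ∉ (A : Finset P) ∧ y' ∉ (A : Finset P)),
      (((A : Finset P).card : ℤ) - 1) • keelClass A) :=
  keelKappa_welldefined_general fourPointRelation_keelClass hxy hxy'
end

section
/- Suppose a group G acts on the vertex set V by permutations in such a way that the induced action on subsets of V maps simplices of K to simplices of K and simplices of H to simplices of H, and let G act on |K| by (g·f)(v) = f(g⁻¹·v). Then the strong deformation retraction F of |K| ∖ |H| onto |M| can be chosen G-equivariant, i.e. F(g·x, t) = g·F(x, t) for all g ∈ G, x ∈ |K| ∖ |H|, t ∈ [0,1]. (Equivariant form of Lemma 5.4.) -/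
/-- The geometric realization `|K|` of a collection `K` of finite subsets of a finite
vertex set `V`: functions `f : V → ℝ` with nonnegative values summing to `1` whose
support is a simplex of `K`. -/
def KReal {V : Type*} [Fintype V] (K : Set (Finset V)) : Set (V → ℝ) :=
  {f | (∀ v, 0 ≤ f v) ∧ (∑ v, f v) = 1 ∧ ∃ a ∈ K, ∀ v, f v ≠ 0 ↔ v ∈ a}

/-- The barycenter of a simplex `a`, as a point of the geometric realization. -/
noncomputable def bary {V : Type*} [DecidableEq V] (a : Finset V) : V → ℝ :=
  fun v => if v ∈ a then ((a.card : ℝ))⁻¹ else 0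

/-- `|M|`: the union, over all chains of simplices of `L = K ∖ H`, of the convex hulls of
the corresponding sets of barycenters; the geometric realization of the subcomplex `M` of
the first barycentric subdivision of `K` whose vertices are barycenters of simplices
of `L`. -/
def MReal {V : Type*} [Fintype V] [DecidableEq V] (K H : Set (Finset V)) : Set (V → ℝ) :=
  ⋃ (T : Finset (Finset V)) (_ : (T : Set (Finset V)) ⊆ K \ H)
    (_ : IsChain (· ⊆ ·) (T : Set (Finset V))),
    convexHull ℝ (bary '' (T : Set (Finset V)))

/-!
Put `L = K ∖ H`, so that `|K| ∖ |H|` is the union of the open simplices of `L`. For a point `x`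
let `τ x = capLevel L x` be the largest `r` such that some simplex of `L` lies in `{v | r ≤ x v}`.
Truncating the coordinates of `x` at height `τ x > 0` and rescaling to total mass `1` keeps the
support, hence the open simplex, and gives a point whose maximum is attained on a whole
simplex of `L`.

Such points are exactly the points of `|M|`. A convex combination of barycenters of a chain is
maximal on the smallest member of the chain. Conversely, by the layer-cake formula a point is a
convex combination of the barycenters of its superlevel sets, which form a chain; if its maximum is
attained on a simplex of `L`, each superlevel set lies between two simplices of `L`, so it is in
`L` as well.

So truncation retracts onto `|M|`, and the straight-line homotopy to it is the deformation. It
commutes with every permutation of the vertices preserving `L`, because `τ` is invariant under it.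
-/

open scoped NNReal

section FiniteFamilies

variable {ι X α : Type*} [Finite ι] [TopologicalSpace X] [TopologicalSpace α]
  [ConditionallyCompleteLattice α]

theorem continuous_iSup_of_finite [ContinuousSup α] {f : ι → X → α}
    (hf : ∀ i, Continuous (f i)) : Continuous fun x => ⨆ i, f i x := by
  cases nonempty_fintype ι
  rcases isEmpty_or_nonempty ι with _ | _
  · simp only [iSup_of_empty']
    exact continuous_const
  · simp only [← Finset.sup'_univ_eq_ciSup]
    exact Continuous.finset_sup'_apply _ fun i _ => hf i

theorem continuous_iInf_of_finite [ContinuousInf α] {f : ι → X → α}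
    (hf : ∀ i, Continuous (f i)) : Continuous fun x => ⨅ i, f i x :=
  continuous_iSup_of_finite (α := αᵒᵈ) hf

end FiniteFamilies

theorem mem_convexHull_of_mem_span_nnreal {E : Type*} [AddCommGroup E] [Module ℝ E] {S : Set E}
    (φ : E →ₗ[ℝ] ℝ) (hS : ∀ s ∈ S, φ s = 1) {x : E} (hx : x ∈ Submodule.span ℝ≥0 S)
    (hφx : φ x = 1) : x ∈ convexHull ℝ S := by
  obtain ⟨c, hcS, rfl⟩ := Submodule.mem_span_set.1 hx
  have weights_sum : ∑ s ∈ c.support, (c s : ℝ) = 1 := by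
    calc ∑ s ∈ c.support, (c s : ℝ) = ∑ s ∈ c.support, (c s : ℝ) * φ s :=
          Finset.sum_congr rfl fun s hs => by rw [hS s (hcS hs), mul_one]
      _ = φ (c.sum fun s r => r • s) := by
          simp only [Finsupp.sum, map_sum, NNReal.smul_def, map_smul, smul_eq_mul]
      _ = 1 := hφx
  exact (convex_convexHull ℝ S).sum_mem (fun s _ => (c s).2) weights_sum
    fun s hs => subset_convexHull ℝ S (hcS hs)

section Realization

variable {V : Type*} [Fintype V] {L : Set (Finset V)} {a : Finset V} {x f : V → ℝ}

theorem mem_KReal_singleton_iff :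
    x ∈ KReal {a} ↔ (∀ v ∈ a, 0 < x v) ∧ (∀ v ∉ a, x v = 0) ∧ ∑ v, x v = 1 := by
  simp only [KReal, Set.mem_ofPred_eq, Set.mem_singleton_iff, exists_eq_left]
  constructor
  · rintro ⟨nonneg, sum_one, supp⟩
    exact ⟨fun v hv => (nonneg v).lt_of_ne' ((supp v).2 hv),
      fun v hv => not_not.1 fun h => hv ((supp v).1 h), sum_one⟩
  · rintro ⟨pos, zero, sum_one⟩
    refine ⟨fun v => ?_, sum_one, fun v => ⟨not_imp_comm.1 (zero v), fun hv => (pos v hv).ne'⟩⟩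
    by_cases hv : v ∈ a
    · exact (pos v hv).le
    · exact (zero v hv).ge

theorem mem_KReal_iff_exists_singleton : x ∈ KReal L ↔ ∃ a ∈ L, x ∈ KReal {a} := by
  simp only [KReal, Set.mem_ofPred_eq, Set.mem_singleton_iff, exists_eq_left]
  tauto

theorem nonempty_of_mem_KReal_singleton (hx : x ∈ KReal {a}) : a.Nonempty := by
  obtain ⟨-, zero, sum_one⟩ := mem_KReal_singleton_iff.1 hx
  by_contra! rfl
  simp [zero] at sum_one

theorem KReal_sdiff (K H : Set (Finset V)) : KReal K \ KReal H = KReal (K \ H) := by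
  ext x
  constructor
  · rintro ⟨⟨nonneg, sum_one, a, haK, supp⟩, hxH⟩
    exact ⟨nonneg, sum_one, a, ⟨haK, fun haH => hxH ⟨nonneg, sum_one, a, haH, supp⟩⟩, supp⟩
  · rintro ⟨nonneg, sum_one, a, ⟨haK, haH⟩, supp⟩
    refine ⟨⟨nonneg, sum_one, a, haK, supp⟩, ?_⟩
    rintro ⟨-, -, b, hbH, supp'⟩
    have hab : a = b := Finset.ext fun v => (supp v).symm.trans (supp' v)
    exact haH (hab ▸ hbH)

theorem convex_KReal_singleton (a : Finset V) : Convex ℝ (KReal {a}) := by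
  intro x hx y hy p q hp hq hpq
  rw [mem_KReal_singleton_iff] at hx hy ⊢
  obtain ⟨x_pos, x_zero, x_sum⟩ := hx
  obtain ⟨y_pos, y_zero, y_sum⟩ := hy
  refine ⟨fun v hv => convex_Ioi (0 : ℝ) (x_pos v hv) (y_pos v hv) hp hq hpq, fun v hv => ?_, ?_⟩
  · simp [x_zero v hv, y_zero v hv]
  · simp [Finset.sum_add_distrib, ← Finset.mul_sum, x_sum, y_sum, hpq]

theorem inv_sum_smul_mem_KReal_singleton (ha : a.Nonempty) (pos : ∀ v ∈ a, 0 < f v)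
    (zero : ∀ v ∉ a, f v = 0) : (∑ v, f v)⁻¹ • f ∈ KReal {a} := by
  have sum_pos : 0 < ∑ v, f v := by
    rw [← Finset.sum_subset a.subset_univ fun v _ hv => zero v hv]
    exact Finset.sum_pos pos ha
  refine mem_KReal_singleton_iff.2 ⟨fun v hv => mul_pos (inv_pos.2 sum_pos) (pos v hv),
    fun v hv => by simp [zero v hv], ?_⟩
  simp only [Pi.smul_apply, smul_eq_mul, ← Finset.mul_sum, inv_mul_cancel₀ sum_pos.ne']

end Realization

theorem ordConnected_sdiff_of_downClosed {V : Type*} {K H : Set (Finset V)}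
    (hKne : ∀ a ∈ K, a.Nonempty) (hKdown : ∀ a ∈ K, ∀ b ⊆ a, b.Nonempty → b ∈ K)
    (hHdown : ∀ a ∈ H, ∀ b ⊆ a, b.Nonempty → b ∈ H) : (K \ H).OrdConnected := by
  refine ⟨fun a ha b hb s ⟨has, hsb⟩ => ⟨?_, fun hsH => ha.2 ?_⟩⟩
  · exact hKdown b hb.1 s hsb ((hKne a ha.1).mono has)
  · exact hHdown s hsH a has (hKne a ha.1)

section PeakSet

variable {V : Type*}

/-- The functions that attain their maximum at every vertex of `a`. The points of `|M|` are the
points of `|K| ∖ |H|` that lie in `peakSet a` for some `a ∈ K ∖ H`. -/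
def peakSet (a : Finset V) : Set (V → ℝ) :=
  {y | ∀ w ∈ a, ∀ v, y v ≤ y w}

theorem convex_peakSet (a : Finset V) : Convex ℝ (peakSet a) := by
  intro x hx y hy p q hp hq _ w hw v
  simp only [Pi.add_apply, Pi.smul_apply, smul_eq_mul]
  gcongr
  · exact hx w hw v
  · exact hy w hw v

theorem smul_mem_peakSet {a : Finset V} {y : V → ℝ} (hy : y ∈ peakSet a) {c : ℝ} (hc : 0 ≤ c) :
    c • y ∈ peakSet a :=
  fun w hw v => mul_le_mul_of_nonneg_left (hy w hw v) hc

theorem bary_mem_peakSet [DecidableEq V] {a s : Finset V} (has : a ⊆ s) : bary s ∈ peakSet a := by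
  intro w hw v
  simp only [bary, if_pos (has hw)]
  split_ifs
  · exact le_rfl
  · positivity

theorem sum_bary [Fintype V] [DecidableEq V] {a : Finset V} (ha : a.Nonempty) :
    ∑ v, bary a v = 1 := by
  simp [bary, ha.card_ne_zero]

variable [Fintype V] [DecidableEq V] {K H : Set (Finset V)} {y : V → ℝ}

theorem exists_mem_peakSet_of_mem_MReal (hy : y ∈ MReal K H) : ∃ a ∈ K \ H, y ∈ peakSet a := by
  simp only [MReal, Set.mem_iUnion] at hy
  obtain ⟨T, hTL, hT, hy⟩ := hy
  have hTne : T.Nonempty := by simpa using convexHull_nonempty_iff.1 ⟨y, hy⟩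
  obtain ⟨a, haT, ha_min⟩ := T.exists_minimal hTne
  have ha_least : ∀ s ∈ T, a ⊆ s := fun s hs => (hT.total haT hs).elim id (ha_min hs)
  refine ⟨a, hTL haT, convexHull_min ?_ (convex_peakSet a) hy⟩
  rintro _ ⟨s, hs, rfl⟩
  exact bary_mem_peakSet (ha_least s hs)

theorem sum_eq_one_of_mem_MReal (hne : ∀ a ∈ K \ H, a.Nonempty) (hy : y ∈ MReal K H) :
    ∑ v, y v = 1 := by
  simp only [MReal, Set.mem_iUnion] at hy
  obtain ⟨T, hTL, -, hy⟩ := hy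
  have sum_linear : IsLinearMap ℝ fun z : V → ℝ => ∑ v, z v :=
    ⟨fun _ _ => Finset.sum_add_distrib, fun c z => (Finset.mul_sum _ z c).symm⟩
  refine convexHull_min ?_ (convex_hyperplane sum_linear 1) hy
  rintro _ ⟨s, hs, rfl⟩
  exact sum_bary (hne s (hTL hs))

end PeakSet

section LayerCake

variable {V : Type*}

/-- The nonempty superlevel sets `{v | r ≤ y v}` of `y` at positive heights `r`. -/
def superlevelSets (y : V → ℝ) : Set (Finset V) :=
  {s | s.Nonempty ∧ ∃ r > 0, ∀ v, v ∈ s ↔ r ≤ y v}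

theorem isChain_superlevelSets (y : V → ℝ) : IsChain (· ⊆ ·) (superlevelSets y) := by
  rintro s ⟨-, r, -, hs⟩ t ⟨-, r', -, ht⟩ -
  rcases le_total r r' with hrr' | hr'r
  · exact Or.inr fun v hv => (hs v).2 (hrr'.trans ((ht v).1 hv))
  · exact Or.inl fun v hv => (ht v).2 (hr'r.trans ((hs v).1 hv))

theorem superlevelSets_max_sub_subset (y : V → ℝ) {m : ℝ} (hm : 0 ≤ m) :
    superlevelSets (fun v => max (y v - m) 0) ⊆ superlevelSets y := by
  rintro s ⟨hsne, r, hr, hs⟩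
  refine ⟨hsne, r + m, by positivity, fun v => ?_⟩
  rw [hs, le_max_iff, or_iff_left hr.not_ge, le_sub_iff_add_le]

variable [DecidableEq V]

theorem eq_max_sub_add_smul_bary {a : Finset V} {y : V → ℝ} {m : ℝ≥0} (hle : ∀ v ∈ a, m ≤ y v)
    (zero : ∀ v ∉ a, y v = 0) :
    y = (fun v => max (y v - m) 0) + (m * a.card : ℝ≥0) • bary a := by
  ext v
  by_cases hv : v ∈ a
  · have hcard : (a.card : ℝ) ≠ 0 := by exact_mod_cast Finset.card_ne_zero_of_mem hv
    simp [NNReal.smul_def, bary, hv, hle v hv, hcard]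
  · simp [bary, hv, zero v hv]

-- Peel off the bottom layer: subtracting the least positive value shrinks the support.
theorem mem_span_bary_superlevelSets [Finite V] {y : V → ℝ} (hy : ∀ v, 0 ≤ y v) :
    y ∈ Submodule.span ℝ≥0 (bary '' superlevelSets y) := by
  cases nonempty_fintype V
  induction hn : (Finset.univ.filter fun v => 0 < y v).card using Nat.strong_induction_on
    generalizing y with
  | _ n ih =>
    set a := Finset.univ.filter fun v => 0 < y v with ha
    have mem_a : ∀ v, v ∈ a ↔ 0 < y v := by simp [ha]
    have zero : ∀ v ∉ a, y v = 0 := fun v hv => (not_lt.1 (mt (mem_a v).2 hv)).antisymm (hy v)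
    rcases a.eq_empty_or_nonempty with ha_empty | ha_ne
    · have y_zero : y = 0 := funext fun v => zero v (by simp [ha_empty])
      exact y_zero ▸ zero_mem _
    obtain ⟨u, hu, u_min⟩ := a.exists_min_image y ha_ne
    lift y u to ℝ≥0 using hy u with m hm
    have m_pos : (0 : ℝ) < m := hm ▸ (mem_a u).1 hu
    have a_mem : a ∈ superlevelSets y :=
      ⟨ha_ne, m, m_pos, fun v => ⟨u_min v, fun h => (mem_a v).2 (m_pos.trans_le h)⟩⟩
    have card_lt : (Finset.univ.filter fun v => 0 < max (y v - m) 0).card < n := by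
      rw [← hn]
      refine Finset.card_lt_card ((Finset.ssubset_iff_of_subset fun v hv => ?_).2 ⟨u, hu, ?_⟩)
      · have : 0 < y v - m := by simpa using hv
        exact (mem_a v).2 (by linarith)
      · simp [← hm]
    have upper_mem : (fun v => max (y v - m) 0) ∈
        Submodule.span ℝ≥0 (bary '' superlevelSets y) :=
      Submodule.span_mono (Set.image_mono (superlevelSets_max_sub_subset y m.2))
        (ih _ card_lt (fun v => le_max_right _ _) rfl)
    have bottom_mem : bary a ∈ Submodule.span ℝ≥0 (bary '' superlevelSets y) :=
      Submodule.subset_span (Set.mem_image_of_mem bary a_mem)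
    convert add_mem upper_mem (Submodule.smul_mem _ (m * a.card : ℝ≥0) bottom_mem) using 1
    exact eq_max_sub_add_smul_bary u_min zero

theorem mem_convexHull_bary_superlevelSets [Fintype V] {y : V → ℝ} (hy : y ∈ stdSimplex ℝ V) :
    y ∈ convexHull ℝ (bary '' superlevelSets y) := by
  refine mem_convexHull_of_mem_span_nnreal (∑ v, LinearMap.proj v) ?_
    (mem_span_bary_superlevelSets hy.1) (by simpa using hy.2)
  rintro _ ⟨s, hs, rfl⟩
  simpa using sum_bary hs.1

end LayerCake

section Subdivision

variable {V : Type*} [Fintype V] {K H L : Set (Finset V)} {a : Finset V} {y : V → ℝ}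

theorem superlevelSets_subset_of_mem_peakSet (hL : L.OrdConnected) (hy : y ∈ KReal L)
    (ha : a ∈ L) (hya : y ∈ peakSet a) : superlevelSets y ⊆ L := by
  rintro s ⟨⟨w, hw⟩, r, r_pos, hs⟩
  obtain ⟨b, hb, hyb⟩ := mem_KReal_iff_exists_singleton.1 hy
  obtain ⟨-, zero, -⟩ := mem_KReal_singleton_iff.1 hyb
  have a_sub : a ⊆ s := fun u hu => (hs u).2 (((hs w).1 hw).trans (hya u hu w))
  have sub_b : s ⊆ b := fun v hv => by
    by_contra hvb
    exact r_pos.not_ge (zero v hvb ▸ (hs v).1 hv)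
  exact hL.out ha hb ⟨a_sub, sub_b⟩

theorem mem_MReal_of_mem_peakSet [DecidableEq V] (hKH : (K \ H).OrdConnected)
    (hy : y ∈ KReal (K \ H)) (ha : a ∈ K \ H) (hya : y ∈ peakSet a) : y ∈ MReal K H := by
  simp only [MReal, Set.mem_iUnion]
  refine ⟨(superlevelSets y).toFinite.toFinset, ?_, ?_, ?_⟩ <;> rw [Set.Finite.coe_toFinset]
  · exact superlevelSets_subset_of_mem_peakSet hKH hy ha hya
  · exact isChain_superlevelSets y
  · exact mem_convexHull_bary_superlevelSets ⟨hy.1, hy.2.1⟩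

end Subdivision

section CapLevel

variable {V : Type*} {L : Set (Finset V)} {a : Finset V} {x y : V → ℝ}

/-- The largest `r` such that some member of `L` is contained in `{v | r ≤ x v}`. If `L` is empty
this is the junk value `0`, and an empty member of `L` contributes the value `0`. -/
noncomputable def capLevel (L : Set (Finset V)) (x : V → ℝ) : ℝ :=
  ⨆ a : L, ⨅ v : a.1, x v

theorem capLevel_comp_perm (σ : Equiv.Perm V) (hσ : ∀ a, a ∈ L ↔ σ.finsetCongr a ∈ L)
    (x : V → ℝ) : capLevel L (x ∘ σ) = capLevel L x :=
  (σ.finsetCongr.subtypeEquiv hσ).iSup_congr fun a =>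
    (Equiv.iInf_congr (σ.subtypeEquiv (q := (· ∈ σ.finsetCongr a.1)) fun v => by simp)
      fun _ => rfl).symm

variable [Finite V]

theorem continuous_capLevel (L : Set (Finset V)) : Continuous (capLevel L) :=
  continuous_iSup_of_finite fun _ => continuous_iInf_of_finite fun v => continuous_apply v.1

theorem le_capLevel (ha : a ∈ L) (ha_ne : a.Nonempty) {r : ℝ} (hr : ∀ v ∈ a, r ≤ x v) :
    r ≤ capLevel L x := by
  have := ha_ne.to_subtype
  calc r ≤ ⨅ v : a, x v := le_ciInf fun v => hr v v.2
    _ ≤ capLevel L x :=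
      le_ciSup (f := fun a : L => ⨅ v : a.1, x v) (Set.finite_range _).bddAbove ⟨a, ha⟩

theorem exists_capLevel_le (hL : L.Nonempty) (x : V → ℝ) :
    ∃ a ∈ L, ∀ v ∈ a, capLevel L x ≤ x v := by
  have := hL.to_subtype
  obtain ⟨a, ha⟩ := exists_eq_ciSup_of_finite (f := fun a : L => ⨅ v : a.1, x v)
  exact ⟨a, a.2, fun v hv => ha.ge.trans
    (ciInf_le (f := fun v : a.1 => x v) (Set.finite_range _).bddBelow ⟨v, hv⟩)⟩

theorem le_capLevel_of_mem_peakSet (ha : a ∈ L) (ha_ne : a.Nonempty) (hy : y ∈ peakSet a) (v : V) :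
    y v ≤ capLevel L y :=
  le_capLevel ha ha_ne fun w hw => hy w hw v

end CapLevel

theorem capLevel_pos {V : Type*} [Fintype V] {L : Set (Finset V)} {x : V → ℝ} (hx : x ∈ KReal L) :
    0 < capLevel L x := by
  obtain ⟨a, ha, hxa⟩ := mem_KReal_iff_exists_singleton.1 hx
  have ha_ne := nonempty_of_mem_KReal_singleton hxa
  obtain ⟨u, hu, u_min⟩ := a.exists_min_image x ha_ne
  exact ((mem_KReal_singleton_iff.1 hxa).1 u hu).trans_le (le_capLevel ha ha_ne u_min)

section Cap

variable {V : Type*} {L : Set (Finset V)} {a : Finset V} {x : V → ℝ}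

/-- The function `x` truncated from above at height `capLevel L x`. -/
noncomputable def cap (L : Set (Finset V)) (x : V → ℝ) : V → ℝ :=
  fun v => min (x v) (capLevel L x)

theorem cap_comp_perm (σ : Equiv.Perm V) (hσ : ∀ a, a ∈ L ↔ σ.finsetCongr a ∈ L) (x : V → ℝ) :
    cap L (x ∘ σ) = cap L x ∘ σ := by
  ext v
  simp only [cap, capLevel_comp_perm σ hσ, Function.comp_apply]

theorem continuous_cap [Finite V] (L : Set (Finset V)) : Continuous (cap L) :=
  continuous_pi fun v => (continuous_apply v).min (continuous_capLevel L)

theorem exists_cap_mem_peakSet [Finite V] (hL : L.Nonempty) (x : V → ℝ) :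
    ∃ a ∈ L, cap L x ∈ peakSet a := by
  obtain ⟨a, ha, hle⟩ := exists_capLevel_le hL x
  refine ⟨a, ha, fun w hw v => ?_⟩
  calc cap L x v ≤ capLevel L x := min_le_right _ _
    _ = cap L x w := (min_eq_right (hle w hw)).symm

theorem cap_eq_self_of_mem_peakSet [Finite V] (ha : a ∈ L) (ha_ne : a.Nonempty)
    (hx : x ∈ peakSet a) : cap L x = x :=
  funext fun v => min_eq_left (le_capLevel_of_mem_peakSet ha ha_ne hx v)

variable [Fintype V]

/-- `cap L x` rescaled to total mass `1`: the end map of the deformation. -/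
noncomputable def capRetraction (L : Set (Finset V)) (x : V → ℝ) : V → ℝ :=
  (∑ v, cap L x v)⁻¹ • cap L x

theorem capRetraction_comp_perm (σ : Equiv.Perm V) (hσ : ∀ a, a ∈ L ↔ σ.finsetCongr a ∈ L)
    (x : V → ℝ) : capRetraction L (x ∘ σ) = capRetraction L x ∘ σ := by
  simp only [capRetraction, cap_comp_perm σ hσ, Function.comp_apply, Equiv.sum_comp σ (cap L x)]
  rfl

theorem capRetraction_mem_KReal_singleton (ha : a ∈ L) (hx : x ∈ KReal {a}) :
    capRetraction L x ∈ KReal {a} := by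
  have level_pos : 0 < capLevel L x := capLevel_pos (mem_KReal_iff_exists_singleton.2 ⟨a, ha, hx⟩)
  obtain ⟨pos, zero, -⟩ := mem_KReal_singleton_iff.1 hx
  exact inv_sum_smul_mem_KReal_singleton (nonempty_of_mem_KReal_singleton hx)
    (fun v hv => lt_min (pos v hv) level_pos) fun v hv => by simp [cap, zero v hv, level_pos.le]

theorem sum_cap_ne_zero (hx : x ∈ KReal L) : ∑ v, cap L x v ≠ 0 := by
  obtain ⟨a, ha, hxa⟩ := mem_KReal_iff_exists_singleton.1 hx
  have sum_one := (capRetraction_mem_KReal_singleton ha hxa).2.1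
  intro sum_zero
  simp [capRetraction, sum_zero] at sum_one

theorem continuousOn_capRetraction (L : Set (Finset V)) :
    ContinuousOn (capRetraction L) (KReal L) := by
  have sum_continuous : Continuous fun x : V → ℝ => ∑ v, cap L x v :=
    continuous_finsetSum _ fun v _ => (continuous_apply v).comp (continuous_cap L)
  exact (sum_continuous.continuousOn.inv₀ fun _ => sum_cap_ne_zero).smul
    (continuous_cap L).continuousOn

theorem capRetraction_mem_MReal [DecidableEq V] {K H : Set (Finset V)}
    (hKH : (K \ H).OrdConnected) (hx : x ∈ KReal (K \ H)) :
    capRetraction (K \ H) x ∈ MReal K H := by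
  obtain ⟨b, hb, hxb⟩ := mem_KReal_iff_exists_singleton.1 hx
  obtain ⟨a, ha, cap_peak⟩ := exists_cap_mem_peakSet ⟨b, hb⟩ x
  refine mem_MReal_of_mem_peakSet hKH ?_ ha (smul_mem_peakSet cap_peak ?_)
  · exact mem_KReal_iff_exists_singleton.2 ⟨b, hb, capRetraction_mem_KReal_singleton hb hxb⟩
  · exact inv_nonneg.2 (Finset.sum_nonneg fun v _ => le_min (hx.1 v) (capLevel_pos hx).le)

theorem capRetraction_eq_self_of_mem_MReal [DecidableEq V] {K H : Set (Finset V)}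
    (hne : ∀ a ∈ K \ H, a.Nonempty) (hx : x ∈ MReal K H) : capRetraction (K \ H) x = x := by
  obtain ⟨a, ha, x_peak⟩ := exists_mem_peakSet_of_mem_MReal hx
  rw [capRetraction, cap_eq_self_of_mem_peakSet ha (hne a ha) x_peak,
    sum_eq_one_of_mem_MReal hne hx, inv_one, one_smul]

end Cap

section Homotopy

variable {V : Type*} [Fintype V] {L : Set (Finset V)} {x : V → ℝ}

/-- The straight-line homotopy from the identity to `capRetraction L`. -/
noncomputable def capHomotopy (L : Set (Finset V)) (p : (V → ℝ) × ℝ) : V → ℝ :=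
  AffineMap.lineMap p.1 (capRetraction L p.1) p.2

theorem continuousOn_capHomotopy (L : Set (Finset V)) :
    ContinuousOn (capHomotopy L) (KReal L ×ˢ Set.univ) :=
  continuousOn_fst.lineMap
    ((continuousOn_capRetraction L).comp continuousOn_fst fun _ hp => hp.1) continuousOn_snd

theorem capHomotopy_mem_KReal (hx : x ∈ KReal L) {t : ℝ} (ht : t ∈ Set.Icc (0 : ℝ) 1) :
    capHomotopy L (x, t) ∈ KReal L := by
  obtain ⟨a, ha, hxa⟩ := mem_KReal_iff_exists_singleton.1 hx
  exact mem_KReal_iff_exists_singleton.2 ⟨a, ha, (convex_KReal_singleton a).lineMap_mem hxa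
    (capRetraction_mem_KReal_singleton ha hxa) ht⟩

theorem capHomotopy_zero (L : Set (Finset V)) (x : V → ℝ) : capHomotopy L (x, 0) = x :=
  AffineMap.lineMap_apply_zero _ _

theorem capHomotopy_one (L : Set (Finset V)) (x : V → ℝ) :
    capHomotopy L (x, 1) = capRetraction L x :=
  AffineMap.lineMap_apply_one _ _

theorem capHomotopy_eq_self (hx : capRetraction L x = x) (t : ℝ) : capHomotopy L (x, t) = x := by
  rw [capHomotopy, hx, AffineMap.lineMap_same_apply]

theorem capHomotopy_comp_perm (σ : Equiv.Perm V) (hσ : ∀ a, a ∈ L ↔ σ.finsetCongr a ∈ L)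
    (x : V → ℝ) (t : ℝ) : capHomotopy L (x ∘ σ, t) = capHomotopy L (x, t) ∘ σ := by
  ext v
  simp only [capHomotopy, capRetraction_comp_perm σ hσ, AffineMap.lineMap_apply_module,
    Pi.add_apply, Pi.smul_apply, Function.comp_apply]

end Homotopy

theorem mem_iff_finsetCongr_toPerm_mem {V G : Type*} [DecidableEq V] [Group G] [MulAction G V]
    {K : Set (Finset V)} (hGK : ∀ g : G, ∀ a ∈ K, Finset.image (fun v => g • v) a ∈ K) (g : G)
    (a : Finset V) : a ∈ K ↔ (MulAction.toPerm g).finsetCongr a ∈ K := by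
  have congr_eq : (MulAction.toPerm g).finsetCongr a = a.image fun v => g • v :=
    Finset.map_eq_image _ _
  rw [congr_eq]
  refine ⟨hGK g a, fun h => ?_⟩
  simpa [Finset.image_image, Function.comp_def] using hGK g⁻¹ _ h

/-- Equivariant form of Lemma 5.4: if a group `G` acts on the vertex set `V` preserving
the simplicial complexes `K` and `H`, then the strong deformation retraction of
`|K| ∖ |H|` onto `|M|` can be chosen `G`-equivariantly, where `G` acts on `|K|` by
`(g • f)(v) = f(g⁻¹ • v)`. -/
theorem equivariant_strong_deformation_retraction_onto_M
    (V : Type*) [Fintype V] [DecidableEq V] (K H : Set (Finset V))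
    (hKne : ∀ a ∈ K, a.Nonempty)
    (hKdown : ∀ a ∈ K, ∀ b ⊆ a, b.Nonempty → b ∈ K)
    (hHK : H ⊆ K)
    (hHdown : ∀ a ∈ H, ∀ b ⊆ a, b.Nonempty → b ∈ H)
    (G : Type*) [Group G] [MulAction G V]
    (hGK : ∀ g : G, ∀ a ∈ K, Finset.image (fun v => g • v) a ∈ K)
    (hGH : ∀ g : G, ∀ a ∈ H, Finset.image (fun v => g • v) a ∈ H) :
    ∃ F : (V → ℝ) × ℝ → (V → ℝ),
      ContinuousOn F ((KReal K \ KReal H) ×ˢ Set.Icc (0 : ℝ) 1) ∧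
      (∀ x ∈ KReal K \ KReal H, ∀ t ∈ Set.Icc (0 : ℝ) 1, F (x, t) ∈ KReal K \ KReal H) ∧
      (∀ x ∈ KReal K \ KReal H, F (x, 0) = x) ∧
      (∀ x ∈ KReal K \ KReal H, F (x, 1) ∈ MReal K H) ∧
      (∀ y ∈ MReal K H, ∀ t ∈ Set.Icc (0 : ℝ) 1, F (y, t) = y) ∧
      (∀ g : G, ∀ x ∈ KReal K \ KReal H, ∀ t ∈ Set.Icc (0 : ℝ) 1,
        F (fun v => x (g⁻¹ • v), t) = fun v => F (x, t) (g⁻¹ • v)) := by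
  have hKH : (K \ H).OrdConnected := ordConnected_sdiff_of_downClosed hKne hKdown hHdown
  have hne : ∀ a ∈ K \ H, a.Nonempty := fun a ha => hKne a ha.1
  have hG : ∀ (g : G) (a : Finset V), a ∈ K \ H ↔ (MulAction.toPerm g).finsetCongr a ∈ K \ H :=
    fun g a => and_congr (mem_iff_finsetCongr_toPerm_mem hGK g a)
      (not_congr (mem_iff_finsetCongr_toPerm_mem hGH g a))
  rw [KReal_sdiff]
  refine ⟨capHomotopy (K \ H), ?_, ?_, ?_, ?_, ?_, ?_⟩
  · exact (continuousOn_capHomotopy _).mono (Set.prod_mono_right (Set.subset_univ _))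
  · exact fun x hx t ht => capHomotopy_mem_KReal hx ht
  · exact fun x _ => capHomotopy_zero _ x
  · exact fun x hx => capHomotopy_one (K \ H) x ▸ capRetraction_mem_MReal hKH hx
  · exact fun y hy t _ => capHomotopy_eq_self (capRetraction_eq_self_of_mem_MReal hne hy) t
  · exact fun g x _ t _ => capHomotopy_comp_perm (MulAction.toPerm g⁻¹) (hG g⁻¹) x t
end
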